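/- Conforming upper bound (majorant): let ũ ∈ L²₋₁(Ω) have weak gradient ∇ũ ∈ L²(Ω;ℝ^N) with e := û − ũ ∈ H¹°₋₁(Ω). Then for every v ∈ L²(Ω;ℝ^N) possessing a weak divergence div v ∈ L²₊₁(Ω), ‖∇e‖_A ≤ M₊(∇ũ,v) := c_{N,α} ‖f + div v‖_{L²₊₁(Ω)} + ‖∇ũ − A^{−1}v‖_A. -/

import Mathlib

open MeasureTheory Filter Topology
open scoped RealInnerProductSpace

noncomputable section

/-- Euclidean space `ℝ^N`. -/
abbrev Euc (N : ℕ) := EuclideanSpace ℝ (Fin N)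

/-- The Poincaré constant `c_N = 2/(N-2)`. -/
def cN (N : ℕ) : ℝ := 2 / ((N : ℝ) - 2)

variable {N : ℕ}

/-- Squared weighted `L²_s(Ω)` norm: `∫_Ω (1+|x|²)^s u(x)² dx`. -/
def sqL2 (Ω : Set (Euc N)) (s : ℝ) (u : Euc N → ℝ) : ℝ :=
  ∫ x in Ω, (1 + ‖x‖ ^ 2) ^ s * u x ^ 2

/-- Weighted `L²_s(Ω)` norm. -/
def nrmL2 (Ω : Set (Euc N)) (s : ℝ) (u : Euc N → ℝ) : ℝ :=
  Real.sqrt (sqL2 Ω s u)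

/-- Membership in the weighted space `L²_s(Ω)` (scalar functions). -/
def MemL2 (Ω : Set (Euc N)) (s : ℝ) (u : Euc N → ℝ) : Prop :=
  AEStronglyMeasurable u (volume.restrict Ω) ∧
    Integrable (fun x => (1 + ‖x‖ ^ 2) ^ s * u x ^ 2) (volume.restrict Ω)

/-- Squared weighted `L²_s(Ω;ℝ^N)` norm for vector fields. -/
def sqL2V (Ω : Set (Euc N)) (s : ℝ) (v : Euc N → Euc N) : ℝ :=
  ∫ x in Ω, (1 + ‖x‖ ^ 2) ^ s * ‖v x‖ ^ 2

/-- Weighted `L²_s(Ω;ℝ^N)` norm for vector fields. -/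
def nrmL2V (Ω : Set (Euc N)) (s : ℝ) (v : Euc N → Euc N) : ℝ :=
  Real.sqrt (sqL2V Ω s v)

/-- Membership in the weighted space `L²_s(Ω;ℝ^N)` (vector fields). -/
def MemL2V (Ω : Set (Euc N)) (s : ℝ) (v : Euc N → Euc N) : Prop :=
  AEStronglyMeasurable v (volume.restrict Ω) ∧
    Integrable (fun x => (1 + ‖x‖ ^ 2) ^ s * ‖v x‖ ^ 2) (volume.restrict Ω)

/-- Test functions: `φ ∈ C_c^∞(Ω)`. -/
def IsTest (Ω : Set (Euc N)) (φ : Euc N → ℝ) : Prop :=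
  ContDiff ℝ (⊤ : ℕ∞) φ ∧ HasCompactSupport φ ∧ tsupport φ ⊆ Ω

/-- `g` is the weak gradient of `u` on `Ω`:
`∫_Ω u ∇φ = −∫_Ω φ g` for all test functions `φ`. -/
def IsWeakGrad (Ω : Set (Euc N)) (u : Euc N → ℝ) (g : Euc N → Euc N) : Prop :=
  ∀ φ : Euc N → ℝ, IsTest Ω φ →
    (∫ x in Ω, u x • gradient φ x) = - ∫ x in Ω, φ x • g x

/-- `d` is the weak divergence of the vector field `v` on `Ω`:
`∫_Ω v·∇φ = −∫_Ω d φ` for all test functions `φ`. -/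
def IsWeakDiv (Ω : Set (Euc N)) (v : Euc N → Euc N) (d : Euc N → ℝ) : Prop :=
  ∀ φ : Euc N → ℝ, IsTest Ω φ →
    (∫ x in Ω, ⟪v x, gradient φ x⟫) = - ∫ x in Ω, d x * φ x

/-- `u ∈ H¹°₋₁(Ω)` with weak gradient `g`: `u ∈ L²₋₁(Ω)`, `g ∈ L²(Ω;ℝ^N)` is the weak
gradient of `u`, and `u` is approximated by test functions in the natural norms. -/
def MemH10 (Ω : Set (Euc N)) (u : Euc N → ℝ) (g : Euc N → Euc N) : Prop :=
  MemL2 Ω (-1) u ∧ MemL2V Ω 0 g ∧ IsWeakGrad Ω u g ∧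
    ∃ φ : ℕ → Euc N → ℝ, (∀ n, IsTest Ω (φ n)) ∧
      Tendsto (fun n => nrmL2 Ω (-1) (fun x => u x - φ n x)) atTop (𝓝 0) ∧
      Tendsto (fun n => nrmL2V Ω 0 (fun x => g x - gradient (φ n) x)) atTop (𝓝 0)

/-- `g ∈ 𝒢`, the closure in `L²(Ω;ℝ^N)` of `{∇φ : φ ∈ C_c^∞(Ω)}`. -/
def MemG (Ω : Set (Euc N)) (g : Euc N → Euc N) : Prop :=
  MemL2V Ω 0 g ∧
    ∃ φ : ℕ → Euc N → ℝ, (∀ n, IsTest Ω (φ n)) ∧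
      Tendsto (fun n => nrmL2V Ω 0 (fun x => g x - gradient (φ n) x)) atTop (𝓝 0)

/-- `ψ ∈ D₀`, the set of weakly divergence-free fields in `L²(Ω;ℝ^N)`. -/
def MemD0 (Ω : Set (Euc N)) (ψ : Euc N → Euc N) : Prop :=
  MemL2V Ω 0 ψ ∧
    ∀ φ : Euc N → ℝ, IsTest Ω φ → (∫ x in Ω, ⟪ψ x, gradient φ x⟫) = 0

/-- The coefficient matrix field `A : Ω → ℝ^{N×N}`: measurable, essentially bounded,
symmetric, and uniformly coercive (`A(x)ξ·ξ ≥ α⁻²|ξ|²` for a.e. `x ∈ Ω`). -/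
structure Coeff (N : ℕ) (Ω : Set (Euc N)) where
  A : Euc N → Euc N →L[ℝ] Euc N
  α : ℝ
  α_pos : 0 < α
  meas : ∀ ξ : Euc N, AEStronglyMeasurable (fun x => A x ξ) (volume.restrict Ω)
  bdd : ∃ C : ℝ, ∀ᵐ x ∂(volume.restrict Ω), ∀ ξ : Euc N, ‖A x ξ‖ ≤ C * ‖ξ‖
  symm : ∀ x : Euc N, ∀ ξ η : Euc N, ⟪A x ξ, η⟫ = ⟪ξ, A x η⟫
  coer : ∀ᵐ x ∂(volume.restrict Ω), ∀ ξ : Euc N, α⁻¹ ^ 2 * ‖ξ‖ ^ 2 ≤ ⟪A x ξ, ξ⟫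

/-- The weighted inner product `⟨v,w⟩_A = ∫_Ω A v · w dx`. -/
def ipA (Ω : Set (Euc N)) (A : Euc N → Euc N →L[ℝ] Euc N) (v w : Euc N → Euc N) : ℝ :=
  ∫ x in Ω, ⟪A x (v x), w x⟫

/-- The squared `A`-weighted norm `‖v‖²_A = ∫_Ω A v · v dx`. -/
def sqA (Ω : Set (Euc N)) (A : Euc N → Euc N →L[ℝ] Euc N) (v : Euc N → Euc N) : ℝ :=
  ipA Ω A v v

/-- The `A`-weighted norm `‖v‖_A`. -/
def nrmA (Ω : Set (Euc N)) (A : Euc N → Euc N →L[ℝ] Euc N) (v : Euc N → Euc N) : ℝ :=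
  Real.sqrt (sqA Ω A v)

/-- `w = A⁻¹ v` (a.e. on `Ω`), with `w ∈ L²(Ω;ℝ^N)`. -/
def IsAInv (Ω : Set (Euc N)) (A : Euc N → Euc N →L[ℝ] Euc N) (v w : Euc N → Euc N) : Prop :=
  MemL2V Ω 0 w ∧ ∀ᵐ x ∂(volume.restrict Ω), A x (w x) = v x

/-!
The error field `g = ∇e` is an `L²`-limit of gradients of test functions. On such gradients the
residual `φ ↦ ∫ A(∇û - A⁻¹v)·∇φ` equals `∫ (f + div v) φ`, which Cauchy–Schwarz with the dual
weights `(1+|x|²)^{±1}` and a Hardy inequality bound by `c_N ‖f + div v‖ ‖∇φ‖`; by continuity and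
coercivity the residual at `g` is at most `c_{N,α} ‖f + div v‖ ‖g‖_A`. Subtracting
`⟨∇ũ - A⁻¹v, g⟩_A` from the residual at `g` leaves `‖g‖_A²`, and one divides by `‖g‖_A`.

The Hardy inequality comes from dilation invariance: `∫ (n ψ(x) + ψ'(x) x) dx = 0`, applied to
`ψ = φ² / (1 + |x|²)` and combined with Young's inequality.
-/

section Dilation

variable {E : Type*} [NormedAddCommGroup E] [NormedSpace ℝ E] [FiniteDimensional ℝ E]
  [MeasurableSpace E] [BorelSpace E] {G : Type*} [NormedAddCommGroup G] [NormedSpace ℝ G]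

lemma integral_fderiv_apply_self (μ : Measure E) [μ.IsAddHaarMeasure] {ψ : E → G}
    (hψ : ContDiff ℝ 1 ψ) (hc : HasCompactSupport ψ) :
    ∫ x, fderiv ℝ ψ x x ∂μ = -((Module.finrank ℝ E : ℝ) • ∫ x, ψ x ∂μ) := by
  let b := Module.finBasis ℝ E
  let coord (i) : E →L[ℝ] ℝ := (b.coord i).toContinuousLinearMap
  have hψ' : Continuous (fderiv ℝ ψ) := hψ.continuous_fderiv one_ne_zero
  have hψ_int : Integrable ψ μ := hψ.continuous.integrable_of_hasCompactSupport hc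
  have partial_int (i) : Integrable (fun x => coord i x • fderiv ℝ ψ x (b i)) μ :=
    ((coord i).continuous.smul (hψ'.clm_apply continuous_const)).integrable_of_hasCompactSupport
      (hc.fderiv_apply (𝕜 := ℝ) (b i)).smul_left
  have fderiv_expand (x : E) : fderiv ℝ ψ x x = ∑ i, coord i x • fderiv ℝ ψ x (b i) :=
    calc fderiv ℝ ψ x x = fderiv ℝ ψ x (∑ i, b.repr x i • b i) := by rw [b.sum_repr]
      _ = ∑ i, coord i x • fderiv ℝ ψ x (b i) := by simp only [map_sum, map_smul]; rfl
  have by_parts (i) : ∫ x, coord i x • fderiv ℝ ψ x (b i) ∂μ = -∫ x, ψ x ∂μ := by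
    have coord_self : coord i (b i) = 1 := by simp [coord]
    rw [integral_smul_fderiv_eq_neg_fderiv_smul_of_integrable]
    · simp only [ContinuousLinearMap.fderiv, coord_self, one_smul]
    · simpa only [ContinuousLinearMap.fderiv, coord_self, one_smul] using hψ_int
    · exact partial_int i
    · exact ((coord i).continuous.smul hψ.continuous).integrable_of_hasCompactSupport hc.smul_left
    · exact fun x _ => (coord i).differentiableAt
    · exact fun x _ => hψ.differentiable one_ne_zero x
  simp only [fderiv_expand]
  rw [integral_finsetSum _ fun i _ => partial_int i]
  simp only [by_parts, Finset.sum_const, Finset.card_univ, Fintype.card_fin, smul_neg,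
    Nat.cast_smul_eq_nsmul]

end Dilation

section Hardy

variable {E : Type*} [NormedAddCommGroup E] [InnerProductSpace ℝ E]

lemma fderiv_inv_one_add_norm_sq_mul_sq_apply_self {φ : E → ℝ} {x : E}
    (hφ : DifferentiableAt ℝ φ x) :
    fderiv ℝ (fun y => (1 + ‖y‖ ^ 2)⁻¹ * φ y ^ 2) x x =
      (1 + ‖x‖ ^ 2)⁻¹ * (2 * φ x * fderiv ℝ φ x x) -
        2 * (‖x‖ ^ 2 * (1 + ‖x‖ ^ 2)⁻¹) * ((1 + ‖x‖ ^ 2)⁻¹ * φ x ^ 2) := by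
  have hpos : 1 + ‖x‖ ^ 2 ≠ 0 := by positivity
  have hweight : HasFDerivAt (fun y : E => (1 + ‖y‖ ^ 2)⁻¹)
      (-(1 + ‖x‖ ^ 2)⁻¹ ^ 2 • (2 • innerSL ℝ x)) x :=
    (inv_pow (1 + ‖x‖ ^ 2) 2 ▸ hasDerivAt_inv hpos).comp_hasFDerivAt x
      ((hasStrictFDerivAt_norm_sq x).hasFDerivAt.const_add 1)
  have hprod := (hweight.mul (hφ.hasFDerivAt.pow 2)).fderiv
  rw [Pi.mul_def] at hprod
  rw [hprod]
  simp only [Nat.add_one_sub_one, pow_one, nsmul_eq_mul, Nat.cast_ofNat, neg_smul, smul_neg,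
    add_apply, smul_apply, smul_eq_mul, neg_apply, coe_innerSL_apply, real_inner_self_eq_norm_sq]
  ring

-- The slack is the square `(κ/2) (1+|x|²)⁻¹ (φ + (2/κ) φ'(x)x)²`.
lemma hardy_pointwise {φ : E → ℝ} {x : E} (hφ : DifferentiableAt ℝ φ x) {κ : ℝ} (hκ : 0 < κ) :
    κ / 2 * ((1 + ‖x‖ ^ 2)⁻¹ * φ x ^ 2) - 2 / κ * ‖fderiv ℝ φ x‖ ^ 2 ≤
      (κ + 2) * ((1 + ‖x‖ ^ 2)⁻¹ * φ x ^ 2) +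
        fderiv ℝ (fun y => (1 + ‖y‖ ^ 2)⁻¹ * φ y ^ 2) x x := by
  rw [fderiv_inv_one_add_norm_sq_mul_sq_apply_self hφ]
  have hw : 0 ≤ (1 + ‖x‖ ^ 2)⁻¹ := by positivity
  have hweight_le : ‖x‖ ^ 2 * (1 + ‖x‖ ^ 2)⁻¹ ≤ 1 :=
    mul_inv_le_one_of_le₀ (le_add_of_nonneg_left zero_le_one) (by positivity)
  set w := (1 + ‖x‖ ^ 2)⁻¹
  set D := fderiv ℝ φ x x
  have hradial : w * D ^ 2 ≤ ‖fderiv ℝ φ x‖ ^ 2 :=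
    calc w * D ^ 2 = w * ‖D‖ ^ 2 := by rw [Real.norm_eq_abs, sq_abs]
      _ ≤ w * (‖fderiv ℝ φ x‖ * ‖x‖) ^ 2 := by gcongr; exact (fderiv ℝ φ x).le_opNorm x
      _ = ‖fderiv ℝ φ x‖ ^ 2 * (‖x‖ ^ 2 * w) := by ring
      _ ≤ ‖fderiv ℝ φ x‖ ^ 2 := mul_le_of_le_one_right (by positivity) hweight_le
  have hyoung : 0 ≤ κ / 2 * (w * φ x ^ 2) + w * (2 * φ x * D) + 2 / κ * (w * D ^ 2) :=
    calc 0 ≤ κ / 2 * w * (φ x + 2 / κ * D) ^ 2 := by positivity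
      _ = _ := by field_simp; ring
  have hdrift : ‖x‖ ^ 2 * w * (w * φ x ^ 2) ≤ w * φ x ^ 2 :=
    mul_le_of_le_one_left (by positivity) hweight_le
  have hgrad := mul_le_mul_of_nonneg_left hradial (by positivity : 0 ≤ 2 / κ)
  linarith

theorem integral_inv_one_add_norm_sq_mul_sq_le [FiniteDimensional ℝ E] [MeasurableSpace E]
    [BorelSpace E] (μ : Measure E) [μ.IsAddHaarMeasure] (hdim : 2 < Module.finrank ℝ E)
    {φ : E → ℝ} (hφ : ContDiff ℝ 1 φ) (hc : HasCompactSupport φ) :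
    ∫ x, (1 + ‖x‖ ^ 2)⁻¹ * φ x ^ 2 ∂μ ≤
      (2 / ((Module.finrank ℝ E : ℝ) - 2)) ^ 2 * ∫ x, ‖fderiv ℝ φ x‖ ^ 2 ∂μ := by
  obtain ⟨κ, hn⟩ : ∃ κ : ℝ, (Module.finrank ℝ E : ℝ) = κ + 2 := ⟨_, (sub_add_cancel _ 2).symm⟩
  have hκ : 0 < κ := by
    have : (2 : ℝ) < Module.finrank ℝ E := by exact_mod_cast hdim
    linarith
  set ψ : E → ℝ := fun x => (1 + ‖x‖ ^ 2)⁻¹ * φ x ^ 2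
  have hψ : ContDiff ℝ 1 ψ :=
    ((contDiff_const.add (contDiff_norm_sq ℝ)).inv fun x => by positivity).mul (hφ.pow 2)
  have hψc : HasCompactSupport ψ :=
    (hc.comp_left (g := fun t : ℝ => t ^ 2) (zero_pow two_ne_zero)).mul_left
  have hψ_int : Integrable ψ μ := hψ.continuous.integrable_of_hasCompactSupport hψc
  have hψ'_int : Integrable (fun x => fderiv ℝ ψ x x) μ :=
    ((hψ.continuous_fderiv one_ne_zero).clm_apply continuous_id).integrable_of_hasCompactSupport
      ((hψc.fderiv (𝕜 := ℝ)).mono fun x hx h0 => hx (by simp [h0]))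
  have hφ'_int : Integrable (fun x => ‖fderiv ℝ φ x‖ ^ 2) μ := by
    have hcont : Continuous fun x => ‖fderiv ℝ φ x‖ ^ 2 :=
      (hφ.continuous_fderiv one_ne_zero).norm.pow 2
    exact hcont.integrable_of_hasCompactSupport
      ((hc.fderiv (𝕜 := ℝ)).mono fun x hx h0 => hx (by simp [h0]))
  have hdilation : (κ + 2) * ∫ x, ψ x ∂μ + ∫ x, fderiv ℝ ψ x x ∂μ = 0 := by
    rw [integral_fderiv_apply_self μ hψ hψc, hn, smul_eq_mul, add_neg_cancel]
  have hbalance : κ / 2 * ∫ x, ψ x ∂μ - 2 / κ * ∫ x, ‖fderiv ℝ φ x‖ ^ 2 ∂μ ≤ 0 := by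
    rw [← hdilation, ← integral_const_mul, ← integral_const_mul, ← integral_const_mul,
      ← integral_sub (hψ_int.const_mul _) (hφ'_int.const_mul _),
      ← integral_add (hψ_int.const_mul _) hψ'_int]
    exact integral_mono ((hψ_int.const_mul _).sub (hφ'_int.const_mul _))
      ((hψ_int.const_mul _).add hψ'_int)
      fun x => hardy_pointwise (hφ.differentiable one_ne_zero x) hκ
  rw [hn, add_sub_cancel_right]
  calc ∫ x, ψ x ∂μ = 2 / κ * (κ / 2 * ∫ x, ψ x ∂μ) := by field_simp
    _ ≤ 2 / κ * (2 / κ * ∫ x, ‖fderiv ℝ φ x‖ ^ 2 ∂μ) :=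
      mul_le_mul_of_nonneg_left (sub_nonpos.1 hbalance) (by positivity)
    _ = (2 / κ) ^ 2 * ∫ x, ‖fderiv ℝ φ x‖ ^ 2 ∂μ := by ring

end Hardy

section SquareIntegrable

variable {X F : Type*} [MeasurableSpace X] {μ : Measure X} [NormedAddCommGroup F]

lemma norm_toLp_two_eq_sqrt_integral {f : X → F} (hf : MemLp f 2 μ) :
    ‖hf.toLp f‖ = √(∫ x, ‖f x‖ ^ 2 ∂μ) := by
  rw [Lp.norm_toLp, hf.eLpNorm_eq_integral_rpow_norm two_ne_zero ENNReal.ofNat_ne_top,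
    ENNReal.toReal_ofReal (by positivity), Real.sqrt_eq_rpow]
  norm_num

variable {𝕜 : Type*} [RCLike 𝕜] [InnerProductSpace 𝕜 F]

lemma inner_toLp_toLp {f g : X → F} (hf : MemLp f 2 μ) (hg : MemLp g 2 μ) :
    inner 𝕜 (hf.toLp f) (hg.toLp g) = ∫ x, inner 𝕜 (f x) (g x) ∂μ := by
  rw [L2.inner_def]
  refine integral_congr_ae ?_
  filter_upwards [hf.coeFn_toLp, hg.coeFn_toLp] with x hfx hgx
  rw [hfx, hgx]

lemma integrable_inner_of_memLp_two {f g : X → F} (hf : MemLp f 2 μ) (hg : MemLp g 2 μ) :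
    Integrable (fun x => inner 𝕜 (f x) (g x)) μ := by
  refine (L2.integrable_inner (𝕜 := 𝕜) (hf.toLp f) (hg.toLp g)).congr ?_
  filter_upwards [hf.coeFn_toLp, hg.coeFn_toLp] with x hfx hgx
  rw [hfx, hgx]

end SquareIntegrable

section WeightedSpaces

variable {Ω : Set (Euc N)} {s : ℝ} {u : Euc N → ℝ}

lemma sq_rpow_half_mul (x : Euc N) (s t : ℝ) :
    ((1 + ‖x‖ ^ 2) ^ (s / 2) * t) ^ 2 = (1 + ‖x‖ ^ 2) ^ s * t ^ 2 := by
  rw [mul_pow, ← Real.rpow_mul_natCast (by positivity), Nat.cast_ofNat,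
    div_mul_cancel₀ s two_ne_zero]

lemma continuous_one_add_norm_sq_rpow (s : ℝ) :
    Continuous fun x : Euc N => (1 + ‖x‖ ^ 2) ^ s :=
  (continuous_const.add (continuous_norm.pow 2)).rpow_const
    fun x => Or.inl (zero_lt_one_add_norm_sq x).ne'

lemma MemL2.memLp (hu : MemL2 Ω s u) :
    MemLp (fun x => (1 + ‖x‖ ^ 2) ^ (s / 2) * u x) 2 (volume.restrict Ω) := by
  have hmeas := (continuous_one_add_norm_sq_rpow (s / 2)).aestronglyMeasurable.mul hu.1
  refine (memLp_two_iff_integrable_sq hmeas).2 ?_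
  simpa only [Pi.mul_apply, sq_rpow_half_mul] using hu.2

lemma MemL2.norm_toLp (hu : MemL2 Ω s u) : ‖hu.memLp.toLp‖ = nrmL2 Ω s u := by
  simp only [norm_toLp_two_eq_sqrt_integral, Real.norm_eq_abs, sq_abs, sq_rpow_half_mul, nrmL2,
    sqL2]

lemma MemL2.neg (hu : MemL2 Ω s u) : MemL2 Ω s fun x => -u x :=
  ⟨hu.1.neg, by simpa only [neg_sq] using hu.2⟩

lemma MemL2.add {v : Euc N → ℝ} (hu : MemL2 Ω s u) (hv : MemL2 Ω s v) :
    MemL2 Ω s fun x => u x + v x := by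
  refine ⟨hu.1.add hv.1, ?_⟩
  have := (hu.memLp.add hv.memLp).integrable_sq
  simpa only [Pi.add_apply, ← mul_add, sq_rpow_half_mul] using this

lemma inner_weighted_mul (x : Euc N) (s a b : ℝ) :
    ⟪(1 + ‖x‖ ^ 2) ^ (s / 2) * a, (1 + ‖x‖ ^ 2) ^ (-s / 2) * b⟫ = a * b := by
  have hcancel : (1 + ‖x‖ ^ 2) ^ (s / 2) * (1 + ‖x‖ ^ 2) ^ (-s / 2) = 1 := by
    rw [← Real.rpow_add (zero_lt_one_add_norm_sq x), neg_div, add_neg_cancel, Real.rpow_zero]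
  simp only [RCLike.inner_apply, conj_trivial]
  linear_combination a * b * hcancel

lemma MemL2.integrable_mul {p : Euc N → ℝ} (hu : MemL2 Ω s u) (hp : MemL2 Ω (-s) p) :
    Integrable (fun x => u x * p x) (volume.restrict Ω) := by
  simpa only [inner_weighted_mul] using integrable_inner_of_memLp_two (𝕜 := ℝ) hu.memLp hp.memLp

lemma MemL2.abs_integral_mul_le {p : Euc N → ℝ} (hu : MemL2 Ω s u) (hp : MemL2 Ω (-s) p) :
    |∫ x in Ω, u x * p x| ≤ nrmL2 Ω s u * nrmL2 Ω (-s) p := by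
  have hcs := abs_real_inner_le_norm hu.memLp.toLp hp.memLp.toLp
  simpa only [inner_toLp_toLp, inner_weighted_mul, hu.norm_toLp, hp.norm_toLp] using hcs

lemma memL2V_zero_iff_memLp {v : Euc N → Euc N} :
    MemL2V Ω 0 v ↔ MemLp v 2 (volume.restrict Ω) := by
  simp only [MemL2V, Real.rpow_zero, one_mul]
  exact ⟨fun h => (memLp_two_iff_integrable_sq_norm h.1).2 h.2,
    fun h => ⟨h.1, (memLp_two_iff_integrable_sq_norm h.1).1 h⟩⟩

lemma norm_toLp_eq_nrmL2V {v : Euc N → Euc N} (hv : MemLp v 2 (volume.restrict Ω)) :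
    ‖hv.toLp v‖ = nrmL2V Ω 0 v := by
  simp only [norm_toLp_two_eq_sqrt_integral, nrmL2V, sqL2V, Real.rpow_zero, one_mul]

end WeightedSpaces

section TestFunctions

variable {Ω : Set (Euc N)} {φ : Euc N → ℝ}

lemma norm_gradient_eq_norm_fderiv (φ : Euc N → ℝ) (x : Euc N) :
    ‖gradient φ x‖ = ‖fderiv ℝ φ x‖ :=
  (InnerProductSpace.toDual ℝ (Euc N)).symm.norm_map _

lemma IsTest.eq_zero_of_notMem (hφ : IsTest Ω φ) {x : Euc N} (hx : x ∉ Ω) : φ x = 0 :=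
  image_eq_zero_of_notMem_tsupport fun h => hx (hφ.2.2 h)

lemma IsTest.fderiv_eq_zero_of_notMem (hφ : IsTest Ω φ) {x : Euc N} (hx : x ∉ Ω) :
    fderiv ℝ φ x = 0 :=
  fderiv_of_notMem_tsupport ℝ fun h => hx (hφ.2.2 h)

lemma IsTest.memL2 (hφ : IsTest Ω φ) (s : ℝ) : MemL2 Ω s φ := by
  have hcont := (continuous_one_add_norm_sq_rpow s).mul (hφ.1.continuous.pow 2)
  have hsupp := hφ.2.1.comp_left (g := fun t : ℝ => t ^ 2) (zero_pow two_ne_zero)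
  exact ⟨hφ.1.continuous.aestronglyMeasurable,
    (hcont.integrable_of_hasCompactSupport hsupp.mul_left).restrict⟩

lemma IsTest.memLp_gradient (hφ : IsTest Ω φ) :
    MemLp (gradient φ) 2 (volume.restrict Ω) := by
  have hcont : Continuous (gradient φ) :=
    (InnerProductSpace.toDual ℝ (Euc N)).symm.continuous.comp
      (hφ.1.continuous_fderiv (by simp))
  have hsupp : HasCompactSupport (gradient φ) :=
    (hφ.2.1.fderiv (𝕜 := ℝ)).comp_left (map_zero _)
  exact (hcont.memLp_of_hasCompactSupport hsupp).restrict Ω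

lemma cN_nonneg (hN : 3 ≤ N) : 0 ≤ cN N := by
  have : (3 : ℝ) ≤ N := by exact_mod_cast hN
  exact div_nonneg two_pos.le (by linarith)

lemma IsTest.nrmL2_neg_one_le (hφ : IsTest Ω φ) (hN : 3 ≤ N) :
    nrmL2 Ω (-1) φ ≤ cN N * nrmL2V Ω 0 (gradient φ) := by
  have hφ_sq : sqL2 Ω (-1) φ = ∫ x : Euc N, (1 + ‖x‖ ^ 2)⁻¹ * φ x ^ 2 := by
    simp only [sqL2, Real.rpow_neg_one]
    exact setIntegral_eq_integral_of_forall_compl_eq_zero fun x hx => by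
      simp [hφ.eq_zero_of_notMem hx]
  have hgrad_sq : sqL2V Ω 0 (gradient φ) = ∫ x : Euc N, ‖fderiv ℝ φ x‖ ^ 2 := by
    simp only [sqL2V, Real.rpow_zero, one_mul, norm_gradient_eq_norm_fderiv]
    exact setIntegral_eq_integral_of_forall_compl_eq_zero fun x hx => by
      simp [hφ.fderiv_eq_zero_of_notMem hx]
  have hardy := integral_inv_one_add_norm_sq_mul_sq_le (volume : Measure (Euc N))
    (by rw [finrank_euclideanSpace_fin]; exact hN)
    (hφ.1.of_le (by exact_mod_cast le_top)) hφ.2.1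
  rw [finrank_euclideanSpace_fin] at hardy
  rw [nrmL2, nrmL2V, hφ_sq, hgrad_sq]
  exact (Real.sqrt_le_sqrt hardy).trans_eq <| by
    rw [← cN, Real.sqrt_mul (sq_nonneg _), Real.sqrt_sq (cN_nonneg hN)]

lemma IsWeakDiv.sub {v₁ v₂ : Euc N → Euc N} {d₁ d₂ : Euc N → ℝ} {s : ℝ}
    (h₁ : IsWeakDiv Ω v₁ d₁) (h₂ : IsWeakDiv Ω v₂ d₂) (hv₁ : MemLp v₁ 2 (volume.restrict Ω))
    (hv₂ : MemLp v₂ 2 (volume.restrict Ω)) (hd₁ : MemL2 Ω s d₁) (hd₂ : MemL2 Ω s d₂) :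
    IsWeakDiv Ω (fun x => v₁ x - v₂ x) fun x => d₁ x - d₂ x := by
  intro φ hφ
  simp only [inner_sub_left, sub_mul]
  rw [integral_sub (integrable_inner_of_memLp_two hv₁ hφ.memLp_gradient)
      (integrable_inner_of_memLp_two hv₂ hφ.memLp_gradient),
    integral_sub (hd₁.integrable_mul (hφ.memL2 _)) (hd₂.integrable_mul (hφ.memL2 _)),
    h₁ φ hφ, h₂ φ hφ]
  ring

lemma MemG.toLp_mem_closure {g : Euc N → Euc N} (hg : MemG Ω g) :
    (memL2V_zero_iff_memLp.1 hg.1).toLp ∈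
      closure (Set.range fun φ : {φ // IsTest Ω φ} => φ.2.memLp_gradient.toLp) := by
  obtain ⟨hgm, φ, hφ, hlim⟩ := hg
  refine mem_closure_of_tendsto (b := atTop) (f := fun n => (hφ n).memLp_gradient.toLp) ?_
    (Eventually.of_forall fun n => ⟨⟨φ n, hφ n⟩, rfl⟩)
  rw [tendsto_iff_norm_sub_tendsto_zero]
  refine hlim.congr fun n => ?_
  rw [norm_sub_rev, ← MemLp.toLp_sub, norm_toLp_eq_nrmL2V]
  rfl

lemma MemG.abs_integral_inner_le {g z : Euc N → Euc N} {C : ℝ} (hg : MemG Ω g)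
    (hz : MemLp z 2 (volume.restrict Ω))
    (hC : ∀ φ, IsTest Ω φ → |∫ x in Ω, ⟪z x, gradient φ x⟫| ≤ C * nrmL2V Ω 0 (gradient φ)) :
    |∫ x in Ω, ⟪z x, g x⟫| ≤ C * nrmL2V Ω 0 g := by
  have hclosed : IsClosed {p | |⟪hz.toLp, p⟫| ≤ C * ‖p‖} :=
    isClosed_le (by fun_prop) (by fun_prop)
  have hmem := closure_minimal ?_ hclosed hg.toLp_mem_closure
  · simpa only [Set.mem_ofPred_eq, inner_toLp_toLp, norm_toLp_eq_nrmL2V] using hmem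
  · rintro _ ⟨⟨φ, hφ⟩, rfl⟩
    simpa only [Set.mem_ofPred_eq, inner_toLp_toLp, norm_toLp_eq_nrmL2V] using hC φ hφ

theorem MemG.abs_integral_inner_le_of_isWeakDiv {g z : Euc N → Euc N} {d : Euc N → ℝ}
    (hN : 3 ≤ N) (hg : MemG Ω g) (hz : MemLp z 2 (volume.restrict Ω)) (hd : MemL2 Ω 1 d)
    (hdiv : IsWeakDiv Ω z d) :
    |∫ x in Ω, ⟪z x, g x⟫| ≤ cN N * nrmL2 Ω 1 d * nrmL2V Ω 0 g := by
  refine hg.abs_integral_inner_le hz fun φ hφ => ?_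
  calc |∫ x in Ω, ⟪z x, gradient φ x⟫| = |∫ x in Ω, d x * φ x| := by rw [hdiv φ hφ, abs_neg]
    _ ≤ nrmL2 Ω 1 d * nrmL2 Ω (-1) φ := hd.abs_integral_mul_le (hφ.memL2 (-1))
    _ ≤ nrmL2 Ω 1 d * (cN N * nrmL2V Ω 0 (gradient φ)) :=
      mul_le_mul_of_nonneg_left (hφ.nrmL2_neg_one_le hN) (Real.sqrt_nonneg _)
    _ = cN N * nrmL2 Ω 1 d * nrmL2V Ω 0 (gradient φ) := by ring

end TestFunctions

section Coefficients

variable {Ω : Set (Euc N)} (M : Coeff N Ω) {u v : Euc N → Euc N}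

lemma Coeff.memLp_apply (hu : MemLp u 2 (volume.restrict Ω)) :
    MemLp (fun x => M.A x (u x)) 2 (volume.restrict Ω) := by
  have hmeas : AEStronglyMeasurable (fun x => M.A x (u x)) (volume.restrict Ω) := by
    have hexpand (x : Euc N) :
        M.A x (u x) = ∑ i, u x i • M.A x (EuclideanSpace.basisFun (Fin N) ℝ i) := by
      conv_lhs => rw [← (EuclideanSpace.basisFun (Fin N) ℝ).sum_repr (u x)]
      simp only [map_sum, map_smul, EuclideanSpace.basisFun_repr]
    simp only [hexpand]
    exact Finset.aestronglyMeasurable_fun_sum _ fun i _ =>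
      ((EuclideanSpace.proj i).continuous.comp_aestronglyMeasurable hu.1).smul (M.meas _)
  obtain ⟨C, hC⟩ := M.bdd
  exact hu.of_le_mul hmeas (hC.mono fun x hx => hx (u x))

lemma Coeff.integrable_inner (hu : MemLp u 2 (volume.restrict Ω))
    (hv : MemLp v 2 (volume.restrict Ω)) :
    Integrable (fun x => ⟪M.A x (u x), v x⟫) (volume.restrict Ω) :=
  integrable_inner_of_memLp_two (M.memLp_apply hu) hv

lemma Coeff.sqA_nonneg (u : Euc N → Euc N) : 0 ≤ sqA Ω M.A u :=
  integral_nonneg_of_ae (M.coer.mono fun x hx => le_trans (by positivity) (hx (u x)))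

lemma Coeff.nrmA_mul_self (u : Euc N → Euc N) : nrmA Ω M.A u * nrmA Ω M.A u = sqA Ω M.A u :=
  Real.mul_self_sqrt (M.sqA_nonneg u)

lemma Coeff.nrmL2V_le_mul_nrmA (hu : MemLp u 2 (volume.restrict Ω)) :
    nrmL2V Ω 0 u ≤ M.α * nrmA Ω M.A u := by
  have hcoer : sqL2V Ω 0 u ≤ M.α ^ 2 * sqA Ω M.A u := by
    rw [sqL2V, sqA, ipA, ← integral_const_mul]
    refine integral_mono_ae (memL2V_zero_iff_memLp.2 hu).2
      ((M.integrable_inner hu hu).const_mul _) (M.coer.mono fun x hx => ?_)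
    have hα := mul_le_mul_of_nonneg_left (hx (u x)) (sq_nonneg M.α)
    rwa [← mul_assoc, ← mul_pow, mul_inv_cancel₀ M.α_pos.ne', one_pow,
      ← Real.rpow_zero (1 + ‖x‖ ^ 2)] at hα
  calc nrmL2V Ω 0 u ≤ √(M.α ^ 2 * sqA Ω M.A u) := Real.sqrt_le_sqrt hcoer
    _ = M.α * nrmA Ω M.A u := by rw [Real.sqrt_mul (sq_nonneg _), Real.sqrt_sq M.α_pos.le, nrmA]

lemma Coeff.ipA_add_left {w : Euc N → Euc N} (hu : MemLp u 2 (volume.restrict Ω))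
    (hv : MemLp v 2 (volume.restrict Ω)) (hw : MemLp w 2 (volume.restrict Ω)) :
    ipA Ω M.A (fun x => u x + v x) w = ipA Ω M.A u w + ipA Ω M.A v w := by
  simp only [ipA, map_add, inner_add_left]
  exact integral_add (M.integrable_inner hu hw) (M.integrable_inner hv hw)

lemma Coeff.sqA_smul_add (hu : MemLp u 2 (volume.restrict Ω))
    (hv : MemLp v 2 (volume.restrict Ω)) (t : ℝ) :
    sqA Ω M.A (fun x => t • u x + v x) =
      sqA Ω M.A u * (t * t) + 2 * ipA Ω M.A u v * t + sqA Ω M.A v := by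
  have hexpand (x : Euc N) : ⟪M.A x (t • u x + v x), t • u x + v x⟫ =
      ⟪M.A x (u x), u x⟫ * (t * t) + ⟪M.A x (u x), v x⟫ * (2 * t) + ⟪M.A x (v x), v x⟫ := by
    have hsymm : ⟪M.A x (v x), u x⟫ = ⟪M.A x (u x), v x⟫ := by
      rw [M.symm, real_inner_comm]
    simp only [map_add, map_smul, inner_add_left, inner_add_right, real_inner_smul_left,
      real_inner_smul_right, hsymm]
    ring
  have huu := (M.integrable_inner hu hu).mul_const (t * t)
  have huv := (M.integrable_inner hu hv).mul_const (2 * t)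
  have hsum : Integrable
      (fun x => ⟪M.A x (u x), u x⟫ * (t * t) + ⟪M.A x (u x), v x⟫ * (2 * t))
      (volume.restrict Ω) := huu.add huv
  simp only [sqA, ipA, hexpand]
  rw [integral_add hsum (M.integrable_inner hv hv), integral_add huu huv,
    integral_mul_const, integral_mul_const]
  ring

lemma Coeff.abs_ipA_le_nrmA_mul_nrmA (hu : MemLp u 2 (volume.restrict Ω))
    (hv : MemLp v 2 (volume.restrict Ω)) :
    |ipA Ω M.A u v| ≤ nrmA Ω M.A u * nrmA Ω M.A v := by
  have hdiscrim := discrim_le_zero fun t => (M.sqA_smul_add hu hv t).symm ▸ M.sqA_nonneg _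
  rw [nrmA, nrmA, ← Real.sqrt_mul (M.sqA_nonneg u)]
  refine Real.abs_le_sqrt ?_
  rw [discrim] at hdiscrim
  linarith

lemma Coeff.nrmA_le_add_of_ipA_add_le {C : ℝ} (hC : 0 ≤ C) (hu : MemLp u 2 (volume.restrict Ω))
    (hv : MemLp v 2 (volume.restrict Ω))
    (hres : ipA Ω M.A (fun x => u x + v x) u ≤ C * nrmA Ω M.A u) :
    nrmA Ω M.A u ≤ C + nrmA Ω M.A v := by
  have hv_nonneg : 0 ≤ nrmA Ω M.A v := Real.sqrt_nonneg _
  have hsq : nrmA Ω M.A u * nrmA Ω M.A u ≤ (C + nrmA Ω M.A v) * nrmA Ω M.A u :=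
    calc nrmA Ω M.A u * nrmA Ω M.A u
        = ipA Ω M.A (fun x => u x + v x) u - ipA Ω M.A v u := by
          rw [M.ipA_add_left hu hv hu, add_sub_cancel_right, M.nrmA_mul_self, sqA]
      _ ≤ C * nrmA Ω M.A u + nrmA Ω M.A v * nrmA Ω M.A u := by
          linarith [neg_le_of_abs_le (M.abs_ipA_le_nrmA_mul_nrmA hv hu)]
      _ = (C + nrmA Ω M.A v) * nrmA Ω M.A u := (add_mul _ _ _).symm
  have hu_nonneg : 0 ≤ nrmA Ω M.A u := Real.sqrt_nonneg _
  rcases hu_nonneg.eq_or_lt with hzero | hpos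
  · rw [← hzero]
    positivity
  · exact le_of_mul_le_mul_right hsq hpos

end Coefficients

theorem stmt_4_general (Ω : Set (Euc N)) (hN : 3 ≤ N) (M : Coeff N Ω)
    {f dv : Euc N → ℝ} {gu gt v w : Euc N → Euc N} (hf : MemL2 Ω 1 f) (hgu : MemL2V Ω 0 gu)
    (hweak : ∀ φ : Euc N → ℝ, IsTest Ω φ →
      (∫ x in Ω, ⟪M.A x (gu x), gradient φ x⟫) = ∫ x in Ω, f x * φ x)
    (he : MemG Ω fun x => gu x - gt x) (hdv : MemL2 Ω 1 dv) (hdiv : IsWeakDiv Ω v dv)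
    (hw : IsAInv Ω M.A v w) :
    nrmA Ω M.A (fun x => gu x - gt x) ≤
      M.α * cN N * nrmL2 Ω 1 (fun x => f x + dv x) +
        nrmA Ω M.A (fun x => gt x - w x) := by
  obtain ⟨hw, hAw⟩ := hw
  rw [memL2V_zero_iff_memLp] at hgu hw
  have hg := memL2V_zero_iff_memLp.1 he.1
  have hq : MemLp (fun x => gt x - w x) 2 (volume.restrict Ω) := by
    simpa only [Pi.sub_def, sub_sub_cancel] using (hgu.sub hg).sub hw
  have hdiv_flux : IsWeakDiv Ω (fun x => M.A x (gu x)) fun x => -f x := fun φ hφ => by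
    simp only [hweak φ hφ, neg_mul, integral_neg, neg_neg]
  have hdiv_Aw : IsWeakDiv Ω (fun x => M.A x (w x)) dv := fun φ hφ => by
    rw [← hdiv φ hφ]
    exact integral_congr_ae (hAw.mono fun x hx => by simp only [hx])
  have hdiv_residual : IsWeakDiv Ω (fun x => M.A x (w x - gu x)) fun x => f x + dv x := by
    simpa only [map_sub, sub_neg_eq_add, add_comm] using
      hdiv_Aw.sub hdiv_flux (M.memLp_apply hw) (M.memLp_apply hgu) hdv hf.neg
  have hresidual := he.abs_integral_inner_le_of_isWeakDiv hN (M.memLp_apply (hw.sub hgu))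
    (hf.add hdv) hdiv_residual
  have hC : 0 ≤ cN N * nrmL2 Ω 1 (fun x => f x + dv x) :=
    mul_nonneg (cN_nonneg hN) (Real.sqrt_nonneg _)
  rw [mul_assoc]
  refine M.nrmA_le_add_of_ipA_add_le (mul_nonneg M.α_pos.le hC) hg hq ?_
  calc ipA Ω M.A (fun x => gu x - gt x + (gt x - w x)) (fun x => gu x - gt x)
      = -∫ x in Ω, ⟪M.A x (w x - gu x), gu x - gt x⟫ := by
        simp only [ipA, sub_add_sub_cancel, ← integral_neg, ← inner_neg_left, ← map_neg, neg_sub]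
    _ ≤ cN N * nrmL2 Ω 1 (fun x => f x + dv x) * nrmL2V Ω 0 (fun x => gu x - gt x) :=
        (neg_le_abs _).trans hresidual
    _ ≤ cN N * nrmL2 Ω 1 (fun x => f x + dv x) * (M.α * nrmA Ω M.A (fun x => gu x - gt x)) :=
        mul_le_mul_of_nonneg_left (M.nrmL2V_le_mul_nrmA hg) hC
    _ = M.α * (cN N * nrmL2 Ω 1 fun x => f x + dv x) * nrmA Ω M.A (fun x => gu x - gt x) := by
        ring

/-- Conforming upper bound (majorant): `‖∇e‖_A ≤ c_{N,α}‖f + div v‖_{L²₊₁} + ‖∇ũ − A⁻¹v‖_A`. -/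
theorem stmt_4 (Ω : Set (Euc N)) (hΩ : IsOpen Ω) (hN : 3 ≤ N) (M : Coeff N Ω)
    (f : Euc N → ℝ) (hf : MemL2 Ω 1 f)
    (uh : Euc N → ℝ) (gu : Euc N → Euc N)
    (huh : MemL2 Ω (-1) uh) (hgu : MemL2V Ω 0 gu) (hguw : IsWeakGrad Ω uh gu)
    (hweak : ∀ φ : Euc N → ℝ, IsTest Ω φ →
      (∫ x in Ω, ⟪M.A x (gu x), gradient φ x⟫) = ∫ x in Ω, f x * φ x)
    (ut : Euc N → ℝ) (gt : Euc N → Euc N)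
    (hut : MemL2 Ω (-1) ut) (hgt : MemL2V Ω 0 gt) (hgtw : IsWeakGrad Ω ut gt)
    (he : MemH10 Ω (fun x => uh x - ut x) (fun x => gu x - gt x)) :
    ∀ (v : Euc N → Euc N) (dv : Euc N → ℝ) (w : Euc N → Euc N),
      MemL2V Ω 0 v → MemL2 Ω 1 dv → IsWeakDiv Ω v dv → IsAInv Ω M.A v w →
      nrmA Ω M.A (fun x => gu x - gt x) ≤
        M.α * cN N * nrmL2 Ω 1 (fun x => f x + dv x) +
          nrmA Ω M.A (fun x => gt x - w x) := by
  intro v dv w _ hdv hdiv hw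
  obtain ⟨_, hg, _, φ, hφ, _, hlim⟩ := he
  exact stmt_4_general Ω hN M hf hgu hweak ⟨hg, φ, hφ, hlim⟩ hdv hdiv hw
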